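/- Assign to the variable p_j the weight j (1 ≤ j ≤ k) and to the variable q_l the weight l (1 ≤ l ≤ n−k), and for each integer d ≥ 0 let A_d ⊆ A denote the image in A = P/I of the weighted-homogeneous polynomials of weighted degree d. Then for every integer j with 0 ≤ 2j ≤ k(n−k), the map A_j → A_{k(n−k)−j} given by multiplication by the class of p_1^{k(n−k)−2j} is a ℂ-linear isomorphism (the hard Lefschetz property of the cohomology ring of the complex Grassmannian, with A_j ≅ H^{2j}(Gr(k,n),ℂ) and p_1 = c_1(S) the generator of H²). -/

import Mathlib

open MvPolynomial Finset

/-- The polynomial ring `P = ℂ[p_1,…,p_k,q_1,…,q_{n-k}]`: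
the variable `Sum.inl j` is `p_{j+1}` and `Sum.inr l` is `q_{l+1}`. -/
abbrev PR (n k : ℕ) := MvPolynomial (Fin k ⊕ Fin (n - k)) ℂ

/-- `pZ n k a` is the Chern class generator `p_a`, with the conventions `p_0 = 1`
and `p_a = 0` for `a < 0` or `a > k`. -/
noncomputable def pZ (n k : ℕ) (a : ℤ) : PR n k :=
  if a = 0 then 1
  else if h : 1 ≤ a ∧ a ≤ (k : ℤ) then
    MvPolynomial.X (Sum.inl ⟨(a - 1).toNat, by omega⟩)
  else 0

/-- `qZ n k a` is the Chern class generator `q_a`, with the conventions `q_0 = 1`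
and `q_a = 0` for `a < 0` or `a > n-k`. -/
noncomputable def qZ (n k : ℕ) (a : ℤ) : PR n k :=
  if a = 0 then 1
  else if h : 1 ≤ a ∧ a ≤ ((n - k : ℕ) : ℤ) then
    MvPolynomial.X (Sum.inr ⟨(a - 1).toNat, by omega⟩)
  else 0

/-- `R_m = Σ_{r+s=m, r,s ≥ 0} p_r q_s`. -/
noncomputable def Rm (n k : ℕ) (m : ℕ) : PR n k :=
  ∑ x ∈ Finset.HasAntidiagonal.antidiagonal m, pZ n k x.1 * qZ n k x.2

/-- The ideal `I ⊆ P` generated by `R_1, …, R_n`. -/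
noncomputable def Igr (n k : ℕ) : Ideal (PR n k) :=
  Ideal.span ((fun m => Rm n k m) '' (Finset.Icc 1 n : Finset ℕ))

/-- Multiplication by `g` as a linear endomorphism of `P`. -/
noncomputable def Mop (n k : ℕ) (g : PR n k) : Module.End ℂ (PR n k) :=
  LinearMap.mulLeft ℂ g

/-- The partial derivative with respect to the variable `i`, as a linear endomorphism. -/
noncomputable def Pd (n k : ℕ) (i : Fin k ⊕ Fin (n - k)) : Module.End ℂ (PR n k) :=
  (MvPolynomial.pderiv i).toLinearMap

/-- The weight of each variable: `p_j` has weight `j` and `q_l` has weight `l`. -/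
def wt (n k : ℕ) : Fin k ⊕ Fin (n - k) → ℕ :=
  fun i => Sum.elim (fun j : Fin k => (j : ℕ) + 1) (fun l : Fin (n - k) => (l : ℕ) + 1) i

/-- `Agr n k d ⊆ A = P/I` is the image of the weighted-homogeneous polynomials of weighted
degree `d`; it corresponds to `H^{2d}(Gr(k,n),ℂ)`. -/
noncomputable def Agr (n k : ℕ) (d : ℕ) : Submodule ℂ (PR n k ⧸ Igr n k) :=
  Submodule.map (Ideal.Quotient.mkₐ ℂ (Igr n k)).toLinearMap
    (MvPolynomial.weightedHomogeneousSubmodule ℂ (wt n k) d)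

/-!
`H*(Gr(k, n))` is the `k`-th exterior power of `H*(ℙⁿ⁻¹) = ℂ[x]/(xⁿ)`, on which multiplication by
`x` and the operator `-x∂² + (n-1)∂` generate a representation of `sl₂`. In the Chern roots
`x₁, …, x_k` of `S`, the induced lowering operator is the conjugate of `∑ᵢ (-xᵢ∂ᵢ² + (n-1)∂ᵢ)` by
the Vandermonde determinant. This is a second-order operator `D` with principal symbol
`Γ(f, g) = -∑ᵢ xᵢ ∂ᵢf ∂ᵢg` and `D p_{r+1} = (k-r)(n-k+r) p_r`. Rewritten in the coordinates `p, q`,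
where `q(t) = 1/p(t)` dictates its values on the `q_l`, it makes sense without Chern roots and
annihilates `I`, hence acts on `A`. The commutator of `p_1` with `D` is multiplication by
`2d - k(n-k)` on `A_d`, so `A` is a representation of `sl₂` with weight spaces `A_d`, and the
`m`-th power of the raising operator is a bijection from weight `-m` to weight `m`.
-/

section Sl2

open LieModule Module.End

variable {K L M : Type*} [Field K] [LieRing L] [LieAlgebra K L]
  [AddCommGroup M] [Module K M] [LieRingModule L M] [LieModule K L M] {h e f : L}

lemma pow_toEnd_e_mem_eigenspace (t : IsSl2Triple h e f) {μ : K} {x : M}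
    (hx : x ∈ (toEnd K L M h).eigenspace μ) (n : ℕ) :
    (toEnd K L M e ^ n) x ∈ (toEnd K L M h).eigenspace (μ + 2 * n) := by
  simp only [mem_eigenspace_iff, toEnd_apply_apply] at hx ⊢
  induction n with
  | zero => simpa using hx
  | succ n ih =>
    rw [pow_succ', mul_apply, toEnd_apply_apply, leibniz_lie, t.lie_h_e_smul K, smul_lie, ih,
      lie_smul, ← add_smul]
    push_cast
    ring_nf

lemma mem_eigenspace_toEnd_neg {μ : K} {x : M} :
    x ∈ (toEnd K L M (-h)).eigenspace (-μ) ↔ x ∈ (toEnd K L M h).eigenspace μ := by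
  simp

lemma pow_toEnd_f_mem_eigenspace (t : IsSl2Triple h e f) {μ : K} {x : M}
    (hx : x ∈ (toEnd K L M h).eigenspace μ) (n : ℕ) :
    (toEnd K L M f ^ n) x ∈ (toEnd K L M h).eigenspace (μ - 2 * n) := by
  rw [← mem_eigenspace_toEnd_neg] at hx ⊢
  convert pow_toEnd_e_mem_eigenspace t.symm hx n using 2
  ring

lemma lie_f_pow_succ_toEnd_e (t : IsSl2Triple h e f) {μ : K} {x : M}
    (hx : x ∈ (toEnd K L M h).eigenspace μ) (n : ℕ) :
    ⁅f, (toEnd K L M e ^ (n + 1)) x⁆ =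
      (toEnd K L M e ^ (n + 1)) ⁅f, x⁆ - ((n + 1) * (μ + n)) • (toEnd K L M e ^ n) x := by
  have lie_f_lie_e (y : M) : ⁅f, ⁅e, y⁆⁆ = ⁅e, ⁅f, y⁆⁆ - ⁅h, y⁆ := by
    rw [← t.lie_e_f, lie_lie]; abel
  have weight (n : ℕ) := pow_toEnd_e_mem_eigenspace t hx n
  simp only [mem_eigenspace_iff, toEnd_apply_apply] at weight
  induction n with
  | zero => simpa [lie_f_lie_e] using weight 0
  | succ n ih =>
    rw [pow_succ', mul_apply, toEnd_apply_apply, lie_f_lie_e, ih, weight, lie_sub, lie_smul,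
      pow_succ' _ n]
    simp only [mul_apply, toEnd_apply_apply]
    push_cast
    module

variable [CharZero K]

lemma exists_pow_toEnd_e_pow_toEnd_f_eq_smul (t : IsSl2Triple h e f) {m : ℕ} {x : M}
    (hx : x ∈ (toEnd K L M h).eigenspace (m : K)) (hex : ⁅e, x⁆ = 0) :
    ∃ c : K, c ≠ 0 ∧ (toEnd K L M e ^ m) ((toEnd K L M f ^ m) x) = c • x := by
  suffices ∀ n ≤ m, ∃ c : K, c ≠ 0 ∧ (toEnd K L M e ^ n) ((toEnd K L M f ^ n) x) = c • x from
    this m le_rfl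
  intro n hn
  induction n with
  | zero => exact ⟨1, one_ne_zero, by simp⟩
  | succ n ih =>
    obtain ⟨c, hc, hcx⟩ := ih (by lia)
    have coeff_ne_zero : ((n : K) + 1) * (m - n) ≠ 0 :=
      mul_ne_zero (Nat.cast_add_one_ne_zero n) (sub_ne_zero.mpr (by exact_mod_cast (by lia)))
    refine ⟨((n + 1) * (m - n)) * c, mul_ne_zero coeff_ne_zero hc, ?_⟩
    rw [pow_succ, mul_apply, toEnd_apply_apply, lie_f_pow_succ_toEnd_e t.symm
      (mem_eigenspace_toEnd_neg.mpr hx), hex, map_zero, zero_sub, map_neg, map_smul, hcx, smul_smul,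
      ← neg_smul]
    ring_nf

/-- The induction on `s` shows first that `⁅f, x⁆ = 0`: it has weight `-(m + 2)` and is annihilated
by `e ^ (m + 2)`. Hence `x` is a lowest weight vector. -/
lemma eq_zero_of_pow_toEnd_e_eq_zero (t : IsSl2Triple h e f) {m s : ℕ} {x : M}
    (hx : x ∈ (toEnd K L M h).eigenspace (-m : K)) (hs : (toEnd K L M f ^ s) x = 0)
    (hm : (toEnd K L M e ^ m) x = 0) : x = 0 := by
  induction s generalizing m x with
  | zero => simpa using hs
  | succ s ih =>
    have hfx : ⁅f, x⁆ ∈ (toEnd K L M h).eigenspace (-(m + 2 : ℕ) : K) := by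
      convert pow_toEnd_f_mem_eigenspace t hx 1 using 2
      · push_cast
        ring
      · simp
    have hfx_zero : ⁅f, x⁆ = 0 := by
      refine ih hfx (by simpa [pow_succ] using hs) ?_
      have := lie_f_pow_succ_toEnd_e t hx m
      rw [pow_succ', mul_apply, hm, map_zero, lie_zero, neg_add_cancel, mul_zero, zero_smul,
        sub_zero] at this
      rw [pow_succ', mul_apply, pow_succ', ← this, map_zero]
    by_contra hx_ne
    refine IsSl2Triple.HasPrimitiveVectorWith.pow_toEnd_f_ne_zero_of_eq_nat (R := K) (μ := m)
      (t := t.symm) ⟨hx_ne, ?_, hfx_zero⟩ rfl le_rfl hm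
    simpa [mem_eigenspace_iff, neg_eq_iff_eq_neg] using hx

lemma exists_pow_toEnd_e_eq (t : IsSl2Triple h e f) {m s : ℕ} {y : M}
    (hy : y ∈ (toEnd K L M h).eigenspace (m : K)) (hs : (toEnd K L M e ^ s) y = 0) :
    ∃ x ∈ (toEnd K L M h).eigenspace (-m : K), (toEnd K L M e ^ m) x = y := by
  induction s generalizing m y with
  | zero => exact ⟨0, zero_mem _, by simpa using hs.symm⟩
  | succ s ih =>
    obtain ⟨z, hz, hzy⟩ := ih (m := m + 2) (y := ⁅e, y⁆)
      (by simpa using pow_toEnd_e_mem_eigenspace t hy 1) (by simpa [pow_succ] using hs)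
    -- Correcting `y` by the preimage of `⁅e, y⁆` makes it a highest weight vector.
    set w := y - (toEnd K L M e ^ (m + 1)) z with hw
    have hwm : w ∈ (toEnd K L M h).eigenspace (m : K) := by
      refine sub_mem hy ?_
      convert pow_toEnd_e_mem_eigenspace t hz (m + 1) using 2
      push_cast
      ring
    have hew : ⁅e, w⁆ = 0 := by
      rw [hw, lie_sub, ← hzy, sub_eq_zero, pow_succ' _ (m + 1), mul_apply, toEnd_apply_apply]
    obtain ⟨c, hc, hcw⟩ := exists_pow_toEnd_e_pow_toEnd_f_eq_smul t hwm hew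
    refine ⟨c⁻¹ • (toEnd K L M f ^ m) w + ⁅e, z⁆, add_mem (Submodule.smul_mem _ _ ?_) ?_, ?_⟩
    · convert pow_toEnd_f_mem_eigenspace t hwm m using 2
      ring
    · convert pow_toEnd_e_mem_eigenspace t hz 1 using 2
      · push_cast
        ring
      · simp
    · rw [map_add, map_smul, hcw, inv_smul_smul₀ hc, ← toEnd_apply_apply K, ← mul_apply, ← pow_succ,
        hw, sub_add_cancel]

theorem bijOn_pow_toEnd_e_eigenspace (t : IsSl2Triple h e f) (m : ℕ)
    (hf : ∀ x ∈ (toEnd K L M h).eigenspace (-m : K), ∃ s, (toEnd K L M f ^ s) x = 0)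
    (he : ∀ x ∈ (toEnd K L M h).eigenspace (m : K), ∃ s, (toEnd K L M e ^ s) x = 0) :
    Set.BijOn (toEnd K L M e ^ m) ((toEnd K L M h).eigenspace (-m : K))
      ((toEnd K L M h).eigenspace (m : K)) := by
  refine ⟨fun x hx ↦ ?_, fun x hx y hy hxy ↦ ?_, fun y hy ↦ ?_⟩
  · have := pow_toEnd_e_mem_eigenspace t hx m
    rwa [show (-m + 2 * m : K) = m by ring] at this
  · obtain ⟨s, hs⟩ := hf (x - y) (sub_mem hx hy)
    exact sub_eq_zero.mp <| eq_zero_of_pow_toEnd_e_eq_zero t (sub_mem hx hy) hs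
      (by rw [map_sub, hxy, sub_self])
  · obtain ⟨s, hs⟩ := he y hy
    exact exists_pow_toEnd_e_eq t hy hs

end Sl2

section SecondOrderOperators

lemma derivation_eq_zero_of_mem_span {R S M : Type*} [CommRing R] [CommRing S] [Algebra R S]
    [AddCommGroup M] [Module R M] [Module S M] (δ : Derivation R S M) {T : Set S}
    (hM : Ideal.span T ≤ Module.annihilator S M) (hT : ∀ t ∈ T, δ t = 0) {x : S}
    (hx : x ∈ Ideal.span T) : δ x = 0 := by
  induction hx using Submodule.span_induction with
  | mem t ht => exact hT t ht
  | zero => exact map_zero δ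
  | add x y _ _ hx hy => rw [map_add, hx, hy, add_zero]
  | smul a x hx' hx =>
    rw [smul_eq_mul, Derivation.leibniz, hx, smul_zero, zero_add,
      Module.mem_annihilator.mp (hM hx')]

lemma pderiv_eq_zero_or_isWeightedHomogeneous {σ R : Type*} [CommSemiring R] {w : σ → ℕ} {d : ℕ}
    {x : MvPolynomial σ R} (hx : IsWeightedHomogeneous w x d) (v : σ) :
    pderiv v x = 0 ∨ ∃ d', d' + w v = d ∧ IsWeightedHomogeneous w (pderiv v x) d' := by
  rcases lt_or_ge d (w v) with hd | hd
  · left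
    ext m
    rw [coeff_pderiv, hx.coeff_eq_zero, zero_mul, coeff_zero]
    rw [map_add, Finsupp.weight_single, one_nsmul]
    lia
  · exact .inr ⟨d - w v, Nat.sub_add_cancel hd, hx.pderiv (Nat.sub_add_cancel hd)⟩

variable {σ R M : Type*} [CommRing R] [AddCommGroup M] [Module R M]
  [Module (MvPolynomial σ R) M] [IsScalarTower R (MvPolynomial σ R) M]

/-- The carré du champ (principal symbol) of a second-order operator on `R[X_v : v ∈ σ]` with
coefficients in a module: the biderivation with `Γ (X v) (X w) = γ v w`. -/
noncomputable def carreDuChamp (γ : σ → σ → M) :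
    Derivation R (MvPolynomial σ R) (Derivation R (MvPolynomial σ R) M) :=
  mkDerivation R fun v ↦ mkDerivation R (γ v)

lemma carreDuChamp_X (γ : σ → σ → M) (v : σ) :
    carreDuChamp γ (X v : MvPolynomial σ R) = mkDerivation R (γ v) :=
  mkDerivation_X R _ v

section Fintype

variable [Fintype σ]

lemma derivation_eq_sum_pderiv (δ : Derivation R (MvPolynomial σ R) M) (x : MvPolynomial σ R) :
    δ x = ∑ v, pderiv v x • δ (X v) := by
  classical
  have : δ = ∑ v, (LinearMap.toSpanSingleton _ M (δ (X v))).compDer (pderiv v) := by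
    refine derivation_ext fun w ↦ ?_
    rw [← Derivation.coeFnAddMonoidHom_apply (∑ v, _), map_sum, Finset.sum_apply]
    simp [Pi.single_apply, ite_smul]
  conv_lhs => rw [this, ← Derivation.coeFnAddMonoidHom_apply, map_sum, Finset.sum_apply]
  simp

lemma mkDerivation_eq_sum (g : σ → M) (x : MvPolynomial σ R) :
    mkDerivation R g x = ∑ v, pderiv v x • g v := by
  rw [derivation_eq_sum_pderiv]
  simp only [mkDerivation_X]

lemma carreDuChamp_eq_sum (γ : σ → σ → M) (x y : MvPolynomial σ R) :
    carreDuChamp γ x y = ∑ v, pderiv v x • mkDerivation R (γ v) y := by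
  rw [carreDuChamp, mkDerivation_eq_sum, ← Derivation.coeFnAddMonoidHom_apply, map_sum,
    Finset.sum_apply]
  simp

end Fintype

lemma derivation_eq_nsmul_of_isWeightedHomogeneous [Finite σ] {w : σ → ℕ} {d : ℕ}
    {x : MvPolynomial σ R} (hx : IsWeightedHomogeneous w x d)
    {δ : Derivation R (MvPolynomial σ R) M} {m : M}
    (hδ : ∀ v, δ (X v) = w v • (X v : MvPolynomial σ R) • m) : δ x = d • x • m := by
  cases nonempty_fintype σ
  rw [derivation_eq_sum_pderiv, ← smul_assoc d, ← hx.sum_weight_X_mul_pderiv, sum_smul]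
  refine sum_congr rfl fun v _ ↦ ?_
  rw [hδ, smul_comm, smul_assoc, mul_comm, mul_smul]

lemma carreDuChamp_comm [Finite σ] {γ : σ → σ → M} (hγ : ∀ v w, γ v w = γ w v)
    (x y : MvPolynomial σ R) : carreDuChamp γ x y = carreDuChamp γ y x := by
  cases nonempty_fintype σ
  simp_rw [carreDuChamp_eq_sum, mkDerivation_eq_sum, smul_sum]
  rw [sum_comm]
  exact sum_congr rfl fun v _ ↦ sum_congr rfl fun w _ ↦ by rw [smul_comm, hγ]

variable [Fintype σ]

/-- The operator `∑ v, κ v ∂_v + ∑ v w, γ v w ∂_w ∂_v` with coefficients in a module. -/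
noncomputable def secondOrderOp (κ : σ → M) (γ : σ → σ → M) : MvPolynomial σ R →ₗ[R] M :=
  (mkDerivation R κ).toLinearMap + ∑ v, (mkDerivation R (γ v)).toLinearMap ∘ₗ
    (pderiv v).toLinearMap

lemma secondOrderOp_apply (κ : σ → M) (γ : σ → σ → M) (x : MvPolynomial σ R) :
    secondOrderOp κ γ x = mkDerivation R κ x + ∑ v, mkDerivation R (γ v) (pderiv v x) := by
  simp [secondOrderOp]

lemma secondOrderOp_X (κ : σ → M) (γ : σ → σ → M) (v : σ) :
    secondOrderOp κ γ (X v : MvPolynomial σ R) = κ v := by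
  classical
  have (w : σ) : mkDerivation R (γ w) (pderiv w (X v)) = 0 := by
    rcases eq_or_ne v w with rfl | h
    · rw [pderiv_X_self, Derivation.map_one_eq_zero]
    · rw [pderiv_X_of_ne h, map_zero]
  rw [secondOrderOp_apply, mkDerivation_X, sum_eq_zero fun w _ ↦ this w, add_zero]

lemma secondOrderOp_one (κ : σ → M) (γ : σ → σ → M) :
    secondOrderOp κ γ (1 : MvPolynomial σ R) = 0 := by
  simp [secondOrderOp_apply]

lemma secondOrderOp_mul (κ : σ → M) {γ : σ → σ → M} (hγ : ∀ v w, γ v w = γ w v)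
    (x y : MvPolynomial σ R) :
    secondOrderOp κ γ (x * y) =
      x • secondOrderOp κ γ y + y • secondOrderOp κ γ x + 2 • carreDuChamp γ x y := by
  have expand (v : σ) : mkDerivation R (γ v) (pderiv v (x * y)) =
      x • mkDerivation R (γ v) (pderiv v y) + y • mkDerivation R (γ v) (pderiv v x) +
        (pderiv v x • mkDerivation R (γ v) y + pderiv v y • mkDerivation R (γ v) x) := by
    simp only [Derivation.leibniz, map_add, smul_eq_mul]
    abel
  rw [two_nsmul]
  nth_rw 2 [carreDuChamp_comm hγ]
  simp only [secondOrderOp_apply, expand, sum_add_distrib, ← smul_sum, ← carreDuChamp_eq_sum,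
    (mkDerivation R κ).leibniz, smul_add]
  abel

lemma secondOrderOp_eq_zero_of_mem_span (κ : σ → M) {γ : σ → σ → M} (hγ : ∀ v w, γ v w = γ w v)
    {T : Set (MvPolynomial σ R)} (hM : Ideal.span T ≤ Module.annihilator (MvPolynomial σ R) M)
    (hΓ : ∀ t ∈ T, ∀ v, mkDerivation R (γ v) t = 0) (hD : ∀ t ∈ T, secondOrderOp κ γ t = 0)
    {x : MvPolynomial σ R} (hx : x ∈ Ideal.span T) : secondOrderOp κ γ x = 0 := by
  induction hx using Submodule.span_induction with
  | mem t ht => exact hD t ht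
  | zero => exact map_zero _
  | add x y _ _ hx hy => rw [map_add, hx, hy, add_zero]
  | smul a x hx' hx =>
    have hΓx (v : σ) : mkDerivation R (γ v) x = 0 :=
      derivation_eq_zero_of_mem_span _ hM (fun t ht ↦ hΓ t ht v) hx'
    rw [smul_eq_mul, secondOrderOp_mul κ hγ, hx, carreDuChamp_eq_sum,
      Module.mem_annihilator.mp (hM hx')]
    simp [hΓx]

end SecondOrderOperators

section SymbolCoefficients

variable {A : Type*} [CommRing A]

/-- The coefficient of `t ^ a * u ^ b` in the series `Γ`, divisible by `t`, that satisfies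
`(1/t - 1/u) * Γ = δ * t * x'(t) * y(u) - ε * u * x(t) * y'(u)` up to terms in `u⁻¹`.
For `ε, δ = ±1` and `x(t) = ∏ᵢ (1 + ξᵢ t) ^ ε`, `y(u) = ∏ᵢ (1 + ξᵢ u) ^ δ` it is
`-∑ᵢ ξᵢ ∂ᵢx(t) ∂ᵢy(u)`, the principal symbol of the lowering operator. -/
def symbolCoeff (ε δ : ℤ) (x y : ℕ → A) (a b : ℕ) : A :=
  ∑ i ∈ range a, (δ * i - ε * (a + b - 1 - i : ℕ)) • (x i * y (a + b - 1 - i))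

variable (ε δ : ℤ) (x y : ℕ → A)

@[simp] lemma symbolCoeff_zero_left (b : ℕ) : symbolCoeff ε δ x y 0 b = 0 := rfl

lemma symbolCoeff_one_left (b : ℕ) : symbolCoeff ε δ x y 1 b = -(ε * b) • (x 0 * y b) := by
  simp [symbolCoeff]

lemma symbolCoeff_succ_left (a b : ℕ) : symbolCoeff ε δ x y (a + 1) b =
    symbolCoeff ε δ x y a (b + 1) + (δ * a - ε * b) • (x a * y b) := by
  simp [symbolCoeff, sum_range_succ, add_right_comm a 1 b, add_assoc]

variable {ε δ x y}

lemma symbolCoeff_eq_zero_of_lt {l : ℕ} (hy : ∀ j, l < j → y j = 0) (a : ℕ) {b : ℕ} (hb : l < b) :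
    symbolCoeff ε δ x y a b = 0 :=
  sum_eq_zero fun i hi ↦ by
    rw [hy _ (by have := mem_range.mp hi; lia), mul_zero, smul_zero]

lemma symbolCoeff_zero_right
    (h : ∀ m : ℕ, ∑ ij ∈ antidiagonal m, (δ * ij.1 - ε * ij.2) • (x ij.1 * y ij.2) = 0) (a : ℕ) :
    symbolCoeff ε δ x y a 0 = 0 := by
  cases a with
  | zero => rfl
  | succ m =>
    rw [← h m, Finset.Nat.sum_antidiagonal_eq_sum_range_succ
      (fun i j ↦ (δ * i - ε * j : ℤ) • (x i * y j))]
    rfl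

lemma symbolCoeff_comm (h : ∀ a, symbolCoeff δ ε y x a 0 = 0) (a b : ℕ) :
    symbolCoeff ε δ x y a b = symbolCoeff δ ε y x b a := by
  induction a generalizing b with
  | zero => rw [h, symbolCoeff_zero_left]
  | succ a ih =>
    rw [symbolCoeff_succ_left, ih, symbolCoeff_succ_left, mul_comm (y b), add_assoc, ← add_smul]
    simp

lemma sum_antidiagonal_symbolCoeff (m : ℕ) :
    ∑ ab ∈ antidiagonal (m + 1), symbolCoeff ε δ x y ab.1 ab.2 =
      ∑ ij ∈ antidiagonal m, ((ij.2 + 1) * (δ * ij.1 - ε * ij.2)) • (x ij.1 * y ij.2) := by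
  let c (i : ℕ) : A := (δ * i - ε * (m - i : ℕ)) • (x i * y (m - i))
  rw [Finset.Nat.sum_antidiagonal_eq_sum_range_succ (symbolCoeff ε δ x y),
    Finset.Nat.sum_antidiagonal_eq_sum_range_succ
      (fun i j ↦ ((j + 1) * (δ * i - ε * j) : ℤ) • (x i * y j))]
  calc ∑ a ∈ range (m + 1).succ, symbolCoeff ε δ x y a (m + 1 - a)
      = ∑ a ∈ range (m + 1), ∑ i ∈ range (a + 1), c i := by
        rw [sum_range_succ', symbolCoeff_zero_left, add_zero]
        refine sum_congr rfl fun a ha ↦ ?_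
        rw [symbolCoeff, show a + 1 + (m + 1 - (a + 1)) - 1 = m by have := mem_range.mp ha; lia]
    _ = ∑ i ∈ range (m + 1), ∑ _j ∈ range (m + 1 - i), c i :=
        sum_range_diag_flip _ fun i _ ↦ c i
    _ = _ := sum_congr rfl fun i hi ↦ by
        rw [sum_const, card_range, ← natCast_zsmul, smul_smul,
          Nat.sub_add_comm (mem_range_succ_iff.mp hi)]
        push_cast
        rfl

lemma sum_antidiagonal_smul_mul_self_eq_zero (ε : ℤ) (x : ℕ → A) (m : ℕ) :
    ∑ ij ∈ antidiagonal m, (ε * ij.1 - ε * ij.2) • (x ij.1 * x ij.2) = 0 := by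
  simp_rw [sub_smul, sum_sub_distrib, sub_eq_zero]
  rw [← Nat.sum_antidiagonal_swap]
  exact sum_congr rfl fun ij _ ↦ by rw [Prod.fst_swap, Prod.snd_swap, mul_comm (x _)]

end SymbolCoefficients

section InverseSequences

variable {A : Type*} [CommRing A] {p q : ℕ → A}

lemma smul_sum_antidiagonal_mul_eq_zero (h : PowerSeries.mk p * PowerSeries.mk q = 1) (m : ℕ) :
    (m : ℤ) • ∑ ij ∈ antidiagonal m, p ij.1 * q ij.2 = 0 := by
  have := congrArg (PowerSeries.coeff m) h
  simp only [PowerSeries.coeff_mul, PowerSeries.coeff_mk, PowerSeries.coeff_one] at this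
  rw [this]
  split_ifs with hm <;> simp [hm]

lemma sum_antidiagonal_smul_mul_inverse_eq_zero
    (h : PowerSeries.mk p * PowerSeries.mk q = 1) (ε : ℤ) (m : ℕ) :
    ∑ ij ∈ antidiagonal m, (-ε * ij.1 - ε * ij.2) • (p ij.1 * q ij.2) = 0 := by
  rw [← smul_zero (-ε), ← smul_sum_antidiagonal_mul_eq_zero h m, smul_smul, smul_sum]
  refine sum_congr rfl fun ij hij ↦ ?_
  rw [← mem_antidiagonal.mp hij]
  push_cast
  ring_nf

/-- `Γ(z_a, p(u) q(u)) = 0`, where `Γ` is the biderivation encoded by `symbolCoeff`. -/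
lemma sum_symbolCoeff_mul_eq_zero (h : PowerSeries.mk p * PowerSeries.mk q = 1) {ε δ : ℤ}
    {z : ℕ → A} (hp : ∀ a, symbolCoeff ε δ z p a 0 = 0) (hq : ∀ a, symbolCoeff ε (-δ) z q a 0 = 0)
    (a m : ℕ) : ∑ rs ∈ antidiagonal m, (symbolCoeff ε δ z p a rs.1 * q rs.2 +
      p rs.1 * symbolCoeff ε (-δ) z q a rs.2) = 0 := by
  induction a generalizing m with
  | zero => simp
  | succ a ih =>
    have shifted := ih (m + 1)
    rw [sum_add_distrib, Finset.Nat.sum_antidiagonal_succ,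
      Finset.Nat.sum_antidiagonal_succ'] at shifted
    simp only [hp, hq, zero_mul, mul_zero, zero_add, ← sum_add_distrib] at shifted
    rw [← shifted, ← sub_eq_zero, ← sum_sub_distrib, ← mul_zero (-ε * z a),
      ← smul_sum_antidiagonal_mul_eq_zero h m, smul_sum, mul_sum]
    refine sum_congr rfl fun rs hrs ↦ ?_
    rw [← mem_antidiagonal.mp hrs, symbolCoeff_succ_left, symbolCoeff_succ_left]
    simp only [zsmul_eq_mul]
    push_cast
    ring

/-- The value of the lowering operator on the `a`-th Chern class, for a bundle of rank `r` with
Chern classes `x` and a complement of rank `r'`; the sign `ε` is `1` for the tautological bundle and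
`-1` for the quotient bundle. -/
def firstOrderCoeff (ε r r' : ℤ) (x : ℕ → A) : ℕ → A
  | 0 => 0
  | m + 1 => (ε * ((r - m) * (r' + m))) • x m

/-- `D(p(t) q(t)) = 0`, where `D` is the second-order operator encoded by `firstOrderCoeff` and
`symbolCoeff`. -/
lemma sum_firstOrderCoeff_add_symbolCoeff_eq_zero
    (h : PowerSeries.mk p * PowerSeries.mk q = 1) (k l : ℤ) (m : ℕ) :
    ∑ rs ∈ antidiagonal m, (p rs.1 * firstOrderCoeff (-1) l k q rs.2 +
      q rs.2 * firstOrderCoeff 1 k l p rs.1 + 2 • symbolCoeff 1 (-1) p q rs.1 rs.2) = 0 := by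
  cases m with
  | zero => simp [firstOrderCoeff]
  | succ m =>
    simp_rw [sum_add_distrib, ← smul_sum]
    rw [sum_antidiagonal_symbolCoeff, Finset.Nat.sum_antidiagonal_succ',
      Finset.Nat.sum_antidiagonal_succ]
    simp only [firstOrderCoeff, mul_zero, zero_add, smul_sum, ← sum_add_distrib]
    rw [← smul_zero (k - l - m - 2), ← smul_sum_antidiagonal_mul_eq_zero h m, smul_sum, smul_sum]
    refine sum_congr rfl fun ij hij ↦ ?_
    rw [← mem_antidiagonal.mp hij]
    simp only [zsmul_eq_mul, nsmul_eq_mul]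
    push_cast
    ring

lemma isNilpotent_of_mk_mul_mk_eq_one (h : PowerSeries.mk p * PowerSeries.mk q = 1) {k l : ℕ}
    (hp : ∀ i, k < i → p i = 0) (hq : ∀ i, l < i → q i = 0) {i : ℕ} (hi : i ≠ 0) :
    IsNilpotent (p i) := by
  have coe_trunc {x : ℕ → A} {d : ℕ} (hx : ∀ i, d < i → x i = 0) :
      ((PowerSeries.mk x).trunc (d + 1) : PowerSeries A) = PowerSeries.mk x := by
    ext j
    rw [Polynomial.coeff_coe, PowerSeries.coeff_trunc, PowerSeries.coeff_mk, ite_eq_left_iff]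
    exact fun hj ↦ (hx j (by lia)).symm
  have trunc_mul : (PowerSeries.mk p).trunc (k + 1) * (PowerSeries.mk q).trunc (l + 1) = 1 := by
    refine Polynomial.coe_injective A ?_
    rw [Polynomial.coe_mul, coe_trunc hp, coe_trunc hq, h, Polynomial.coe_one]
  have := (Polynomial.isUnit_iff_coeff_isUnit_isNilpotent.mp (.of_mul_eq_one _ trunc_mul)).2 i hi
  rwa [← Polynomial.coeff_coe, coe_trunc hp, PowerSeries.coeff_mk] at this

end InverseSequences

section Grassmannian

/-- The rank of the tautological bundle `S` (`true`) or of the quotient bundle `Q` (`false`). -/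
def bundleRank (n k : ℕ) : Bool → ℕ
  | true => k
  | false => n - k

/-- The sign `1` for `S` and `-1` for `Q`: the exponent with which the Chern roots of `S` enter the
total Chern class. -/
def bundleSign : Bool → ℤ
  | true => 1
  | false => -1

lemma bundleSign_not (s : Bool) : bundleSign (!s) = -bundleSign s := by
  cases s <;> rfl

/-- The generator `p_a` (for `true`) or `q_a` (for `false`) of the polynomial ring `P`; treating
both families at once turns every argument about `p` into one about `q`. -/
noncomputable def chernPoly (n k : ℕ) : Bool → ℕ → PR n k
  | true, a => pZ n k a
  | false, a => qZ n k a

/-- The Chern class `c_a(S)` (for `true`) or `c_a(Q)` (for `false`) in `A = P/I`. -/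
noncomputable def chernClass (n k : ℕ) (s : Bool) (a : ℕ) : PR n k ⧸ Igr n k :=
  Ideal.Quotient.mk (Igr n k) (chernPoly n k s a)

variable {n k : ℕ}

lemma chernPoly_isLeft_wt (v : Fin k ⊕ Fin (n - k)) :
    chernPoly n k v.isLeft (wt n k v) = X v := by
  rcases v with i | i
  · have hi : (1 : ℤ) ≤ (i + 1 : ℕ) ∧ ((i + 1 : ℕ) : ℤ) ≤ k := by have := i.isLt; lia
    simp only [chernPoly, wt, pZ, Sum.elim_inl, Sum.isLeft_inl]
    rw [if_neg (by lia), dif_pos hi]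
    simp
  · have hi : (1 : ℤ) ≤ (i + 1 : ℕ) ∧ ((i + 1 : ℕ) : ℤ) ≤ (n - k : ℕ) := by have := i.isLt; lia
    simp only [chernPoly, wt, qZ, Sum.elim_inr, Sum.isLeft_inr]
    rw [if_neg (by lia), dif_pos hi]
    simp

lemma chernPoly_zero (s : Bool) : chernPoly n k s 0 = 1 := by
  cases s <;> simp [chernPoly, pZ, qZ]

lemma chernPoly_eq_zero_of_lt {s : Bool} {a : ℕ} (ha : bundleRank n k s < a) :
    chernPoly n k s a = 0 := by
  cases s <;> simp only [bundleRank] at ha <;> simp only [chernPoly, pZ, qZ]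
  · rw [if_neg (by lia), dif_neg (by lia)]
  · rw [if_neg (by lia), dif_neg (by lia)]

lemma exists_wt_eq {s : Bool} {a : ℕ} (ha : a ≠ 0) (has : a ≤ bundleRank n k s) :
    ∃ v : Fin k ⊕ Fin (n - k), v.isLeft = s ∧ wt n k v = a := by
  obtain ⟨a, rfl⟩ := Nat.exists_eq_succ_of_ne_zero ha
  cases s
  · exact ⟨.inr ⟨a, has⟩, rfl, rfl⟩
  · exact ⟨.inl ⟨a, has⟩, rfl, rfl⟩

lemma chernPoly_cases {motive : Bool → ℕ → PR n k → Prop} (s : Bool) (a : ℕ)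
    (one : motive s 0 1) (X : ∀ v, motive v.isLeft (wt n k v) (X v))
    (zero : ∀ a, bundleRank n k s < a → motive s a 0) : motive s a (chernPoly n k s a) := by
  rcases eq_or_ne a 0 with rfl | ha
  · rwa [chernPoly_zero]
  · rcases le_or_gt a (bundleRank n k s) with has | has
    · obtain ⟨v, rfl, rfl⟩ := exists_wt_eq ha has
      rw [chernPoly_isLeft_wt]
      exact X v
    · rw [chernPoly_eq_zero_of_lt has]
      exact zero a has

lemma mk_mul_mk_chernClass (hk : k ≤ n) (s : Bool) :
    PowerSeries.mk (chernClass n k s) * PowerSeries.mk (chernClass n k !s) = 1 := by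
  suffices PowerSeries.mk (chernClass n k true) * PowerSeries.mk (chernClass n k false) = 1 by
    cases s
    · rwa [mul_comm]
    · exact this
  ext m
  have coeff_eq : PowerSeries.coeff m (PowerSeries.mk (chernClass n k true) *
      PowerSeries.mk (chernClass n k false)) = Ideal.Quotient.mk (Igr n k) (Rm n k m) := by
    simp only [PowerSeries.coeff_mul, PowerSeries.coeff_mk, Rm, map_sum, map_mul]
    rfl
  rw [coeff_eq, PowerSeries.coeff_one]
  rcases Nat.eq_zero_or_pos m with rfl | hm
  · simp [Rm, pZ, qZ]
  rw [if_neg hm.ne', Ideal.Quotient.eq_zero_iff_mem]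
  rcases le_or_gt m n with hmn | hmn
  · exact Ideal.subset_span ⟨m, by simp [hmn, Nat.one_le_iff_ne_zero, hm.ne'], rfl⟩
  · have : Rm n k m = 0 := sum_eq_zero fun rs hrs ↦ by
      have hrs := mem_antidiagonal.mp hrs
      change chernPoly n k true rs.1 * chernPoly n k false rs.2 = 0
      rcases lt_or_ge k rs.1 with h | h
      · rw [chernPoly_eq_zero_of_lt h, zero_mul]
      · rw [chernPoly_eq_zero_of_lt (s := false) (show n - k < rs.2 by lia), mul_zero]
    simp [this]

lemma symbolCoeff_chernClass_zero_right (hk : k ≤ n) (s t : Bool) (a : ℕ) :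
    symbolCoeff (bundleSign s) (bundleSign t) (chernClass n k s) (chernClass n k t) a 0 = 0 := by
  refine symbolCoeff_zero_right (fun m ↦ ?_) a
  rcases Bool.eq_or_eq_not t s with rfl | rfl
  · exact sum_antidiagonal_smul_mul_self_eq_zero _ _ m
  · rw [bundleSign_not]
    exact sum_antidiagonal_smul_mul_inverse_eq_zero (mk_mul_mk_chernClass hk s) _ m

/-- The principal symbol of the lowering operator on a pair of generators of `P`. -/
noncomputable def loweringSymbol (n k : ℕ) (v w : Fin k ⊕ Fin (n - k)) : PR n k ⧸ Igr n k :=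
  symbolCoeff (bundleSign v.isLeft) (bundleSign w.isLeft) (chernClass n k v.isLeft)
    (chernClass n k w.isLeft) (wt n k v) (wt n k w)

lemma loweringSymbol_comm (hk : k ≤ n) (v w : Fin k ⊕ Fin (n - k)) :
    loweringSymbol n k v w = loweringSymbol n k w v :=
  symbolCoeff_comm (symbolCoeff_chernClass_zero_right hk _ _) _ _

lemma chernClass_eq_zero_of_lt {s : Bool} {a : ℕ} (ha : bundleRank n k s < a) :
    chernClass n k s a = 0 := by
  rw [chernClass, chernPoly_eq_zero_of_lt ha, map_zero]

lemma mkDerivation_loweringSymbol_chernPoly (hk : k ≤ n) (v : Fin k ⊕ Fin (n - k)) (s : Bool)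
    (a : ℕ) : mkDerivation ℂ (loweringSymbol n k v) (chernPoly n k s a) =
      symbolCoeff (bundleSign v.isLeft) (bundleSign s) (chernClass n k v.isLeft)
        (chernClass n k s) (wt n k v) a := by
  induction s, a using chernPoly_cases with
  | one => rw [symbolCoeff_chernClass_zero_right hk, Derivation.map_one_eq_zero]
  | X w => exact mkDerivation_X ℂ _ w
  | zero a ha =>
    rw [symbolCoeff_eq_zero_of_lt (fun _ ↦ chernClass_eq_zero_of_lt) _ ha, map_zero]

lemma carreDuChamp_chernPoly (hk : k ≤ n) (s t : Bool) (a b : ℕ) :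
    carreDuChamp (loweringSymbol n k) (chernPoly n k s a) (chernPoly n k t b) =
      symbolCoeff (bundleSign s) (bundleSign t) (chernClass n k s) (chernClass n k t) a b := by
  induction s, a using chernPoly_cases with
  | one => simp
  | X v => rw [carreDuChamp_X, mkDerivation_loweringSymbol_chernPoly hk]
  | zero a ha =>
    rw [symbolCoeff_comm (symbolCoeff_chernClass_zero_right hk _ _),
      symbolCoeff_eq_zero_of_lt (fun _ ↦ chernClass_eq_zero_of_lt) _ ha, map_zero,
      Derivation.zero_apply]

/-- The value of the lowering operator on `c_a(S)` (for `true`) or `c_a(Q)` (for `false`). -/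
noncomputable def loweringValue (n k : ℕ) (s : Bool) : ℕ → PR n k ⧸ Igr n k :=
  firstOrderCoeff (bundleSign s) (bundleRank n k s) (bundleRank n k !s) (chernClass n k s)

/-- The lowering operator of the `sl₂`-triple, before descending to `A` in the source: the
second-order operator `P → A` with the prescribed symbol and values on the generators. -/
noncomputable def polyLowering (n k : ℕ) : PR n k →ₗ[ℂ] PR n k ⧸ Igr n k :=
  secondOrderOp (fun v ↦ loweringValue n k v.isLeft (wt n k v)) (loweringSymbol n k)

lemma polyLowering_chernPoly (s : Bool) (a : ℕ) :
    polyLowering n k (chernPoly n k s a) = loweringValue n k s a := by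
  induction s, a using chernPoly_cases with
  | one => exact secondOrderOp_one _ _
  | X v => exact secondOrderOp_X _ _ v
  | zero a ha =>
    obtain ⟨m, rfl⟩ := Nat.exists_eq_add_one_of_ne_zero (Nat.ne_zero_of_lt ha)
    rw [map_zero, loweringValue, firstOrderCoeff]
    rcases (Nat.lt_succ_iff.mp ha).eq_or_lt with rfl | h
    · simp
    · rw [chernClass_eq_zero_of_lt h, smul_zero]

lemma polyLowering_mul (hk : k ≤ n) (x y : PR n k) :
    polyLowering n k (x * y) = x • polyLowering n k y + y • polyLowering n k x +
      2 • carreDuChamp (loweringSymbol n k) x y :=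
  secondOrderOp_mul _ (loweringSymbol_comm hk) x y

lemma mkDerivation_loweringSymbol_Rm (hk : k ≤ n) (v : Fin k ⊕ Fin (n - k)) (m : ℕ) :
    mkDerivation ℂ (loweringSymbol n k v) (Rm n k m) = 0 := by
  have expand (r s : ℕ) : mkDerivation ℂ (loweringSymbol n k v) (pZ n k r * qZ n k s) = _ :=
    Derivation.leibniz _ (chernPoly n k true r) (chernPoly n k false s)
  simp only [Rm, map_sum, expand, mkDerivation_loweringSymbol_chernPoly hk]
  rw [← sum_symbolCoeff_mul_eq_zero (mk_mul_mk_chernClass hk true) (δ := 1)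
    (symbolCoeff_chernClass_zero_right hk v.isLeft true)
    (symbolCoeff_chernClass_zero_right hk v.isLeft false) (wt n k v) m]
  refine sum_congr rfl fun rs _ ↦ ?_
  rw [add_comm, mul_comm (symbolCoeff ..)]
  rfl

lemma polyLowering_Rm (hk : k ≤ n) (m : ℕ) : polyLowering n k (Rm n k m) = 0 := by
  have expand (r s : ℕ) : polyLowering n k (pZ n k r * qZ n k s) = _ :=
    polyLowering_mul hk (chernPoly n k true r) (chernPoly n k false s)
  simp only [Rm, map_sum, expand, polyLowering_chernPoly, carreDuChamp_chernPoly hk]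
  exact sum_firstOrderCoeff_add_symbolCoeff_eq_zero (mk_mul_mk_chernClass hk true) k (n - k : ℕ) m

lemma polyLowering_eq_zero_of_mem_Igr (hk : k ≤ n) {x : PR n k} (hx : x ∈ Igr n k) :
    polyLowering n k x = 0 := by
  refine secondOrderOp_eq_zero_of_mem_span _ (loweringSymbol_comm hk) ?_ ?_ ?_ hx
  · exact Ideal.annihilator_quotient.ge
  · rintro _ ⟨m, -, rfl⟩ v
    exact mkDerivation_loweringSymbol_Rm hk v m
  · rintro _ ⟨m, -, rfl⟩
    exact polyLowering_Rm hk m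

/-- The lowering operator of the `sl₂`-triple acting on `A`. -/
noncomputable def lowering (hk : k ≤ n) : Module.End ℂ (PR n k ⧸ Igr n k) :=
  Submodule.liftQ ((Igr n k).restrictScalars ℂ) (polyLowering n k)
    (fun _ hx ↦ polyLowering_eq_zero_of_mem_Igr hk hx) ∘ₗ
  (Submodule.Quotient.restrictScalarsEquiv ℂ (Igr n k)).symm.toLinearMap

lemma lowering_mk (hk : k ≤ n) (x : PR n k) :
    lowering hk (Ideal.Quotient.mk (Igr n k) x) = polyLowering n k x :=
  rfl

lemma isWeightedHomogeneous_chernPoly (s : Bool) (a : ℕ) :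
    IsWeightedHomogeneous (wt n k) (chernPoly n k s a) a := by
  induction s, a using chernPoly_cases with
  | one => exact isWeightedHomogeneous_one ℂ _
  | X v => exact isWeightedHomogeneous_X ℂ _ v
  | zero a => exact isWeightedHomogeneous_zero ℂ _ a

lemma mk_mem_Agr {x : PR n k} {d : ℕ} (hx : IsWeightedHomogeneous (wt n k) x d) :
    Ideal.Quotient.mk (Igr n k) x ∈ Agr n k d :=
  ⟨x, hx, rfl⟩

lemma chernClass_mem_Agr (s : Bool) (a : ℕ) : chernClass n k s a ∈ Agr n k a :=
  mk_mem_Agr (isWeightedHomogeneous_chernPoly s a)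

lemma mul_mem_Agr {x y : PR n k ⧸ Igr n k} {d e : ℕ} (hx : x ∈ Agr n k d) (hy : y ∈ Agr n k e) :
    x * y ∈ Agr n k (d + e) := by
  obtain ⟨x, hx, rfl⟩ := hx
  obtain ⟨y, hy, rfl⟩ := hy
  exact ⟨x * y, IsWeightedHomogeneous.mul hx hy, map_mul (Ideal.Quotient.mkₐ ℂ (Igr n k)) x y⟩

lemma loweringValue_mem_Agr (s : Bool) (a : ℕ) : loweringValue n k s a ∈ Agr n k (a - 1) := by
  cases a with
  | zero => exact zero_mem _
  | succ m => exact zsmul_mem (chernClass_mem_Agr s m) _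

lemma loweringSymbol_mem_Agr (v w : Fin k ⊕ Fin (n - k)) :
    loweringSymbol n k v w ∈ Agr n k (wt n k v + wt n k w - 1) := by
  rw [loweringSymbol, symbolCoeff]
  refine sum_mem fun i hi ↦ zsmul_mem ?_ _
  have := mul_mem_Agr (chernClass_mem_Agr (n := n) (k := k) v.isLeft i)
    (chernClass_mem_Agr w.isLeft (wt n k v + wt n k w - 1 - i))
  rwa [Nat.add_sub_cancel' (by have := mem_range.mp hi; lia)] at this

lemma one_le_wt (v : Fin k ⊕ Fin (n - k)) : 1 ≤ wt n k v := by
  rcases v with i | i <;> exact Nat.le_add_left 1 i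

lemma mkDerivation_mem_Agr {x : PR n k} {d c : ℕ} (hx : IsWeightedHomogeneous (wt n k) x d)
    {g : Fin k ⊕ Fin (n - k) → PR n k ⧸ Igr n k} (hg : ∀ v, g v ∈ Agr n k (c + wt n k v - 1)) :
    mkDerivation ℂ g x ∈ Agr n k (c + d - 1) := by
  rw [mkDerivation_eq_sum]
  refine sum_mem fun v _ ↦ ?_
  rcases pderiv_eq_zero_or_isWeightedHomogeneous hx v with hv | ⟨d', hd', hv⟩
  · rw [hv, zero_smul]
    exact zero_mem _
  · have := mul_mem_Agr (mk_mem_Agr hv) (hg v)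
    rwa [show d' + (c + wt n k v - 1) = c + d - 1 by have := one_le_wt v; lia] at this

lemma polyLowering_mem_Agr {x : PR n k} {d : ℕ} (hx : IsWeightedHomogeneous (wt n k) x d) :
    polyLowering n k x ∈ Agr n k (d - 1) := by
  rw [polyLowering, secondOrderOp_apply]
  refine add_mem ?_ (sum_mem fun v _ ↦ ?_)
  · simpa using mkDerivation_mem_Agr (c := 0) hx
      fun v ↦ by simpa using loweringValue_mem_Agr v.isLeft (wt n k v)
  · rcases pderiv_eq_zero_or_isWeightedHomogeneous hx v with hv | ⟨d', rfl, hv⟩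
    · rw [hv, map_zero]
      exact zero_mem _
    · rw [add_comm d']
      exact mkDerivation_mem_Agr hv (loweringSymbol_mem_Agr v)

lemma polyLowering_eq_zero_of_isWeightedHomogeneous_zero {x : PR n k}
    (hx : IsWeightedHomogeneous (wt n k) x 0) :
    polyLowering n k x = 0 := by
  have pderiv_eq_zero (v) : pderiv v x = 0 := by
    refine (pderiv_eq_zero_or_isWeightedHomogeneous hx v).resolve_right ?_
    rintro ⟨d', hd', -⟩
    have := one_le_wt v
    lia
  simp [polyLowering, secondOrderOp_apply, mkDerivation_eq_sum, pderiv_eq_zero]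

lemma pow_lowering_eq_zero (hk : k ≤ n) {d : ℕ} {x : PR n k ⧸ Igr n k} (hx : x ∈ Agr n k d) :
    (lowering hk ^ (d + 1)) x = 0 := by
  induction d generalizing x with
  | zero =>
    obtain ⟨x, hx, rfl⟩ := hx
    rw [zero_add, pow_one]
    exact (lowering_mk hk x).trans (polyLowering_eq_zero_of_isWeightedHomogeneous_zero hx)
  | succ d ih =>
    obtain ⟨x, hx, rfl⟩ := hx
    exact ih (polyLowering_mem_Agr hx)

variable (n k) in
/-- The raising operator of the `sl₂`-triple: multiplication by `p_1 = c_1(S)`. -/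
noncomputable def raising : Module.End ℂ (PR n k ⧸ Igr n k) :=
  LinearMap.mulLeft ℂ (chernClass n k true 1)

lemma exists_pow_raising_eq_zero (hk : k ≤ n) : ∃ s, raising n k ^ s = 0 := by
  obtain ⟨s, hs⟩ := isNilpotent_of_mk_mul_mk_eq_one (mk_mul_mk_chernClass hk true)
    (fun _ ↦ chernClass_eq_zero_of_lt) (fun _ ↦ chernClass_eq_zero_of_lt) one_ne_zero
  exact ⟨s, by rw [raising, LinearMap.pow_mulLeft, hs, LinearMap.mulLeft_zero_eq_zero]⟩

lemma carreDuChamp_chernPoly_one (hk : k ≤ n) {x : PR n k} {d : ℕ}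
    (hx : IsWeightedHomogeneous (wt n k) x d) :
    carreDuChamp (loweringSymbol n k) (chernPoly n k true 1) x =
      -(d • Ideal.Quotient.mk (Igr n k) x) := by
  rw [← neg_eq_iff_eq_neg]
  have neg_apply_X (v) : (-carreDuChamp (loweringSymbol n k) (chernPoly n k true 1)) (X v) =
      wt n k v • (X v : PR n k) • (1 : PR n k ⧸ Igr n k) := by
    rw [← chernPoly_isLeft_wt, Derivation.neg_apply, carreDuChamp_chernPoly hk,
      symbolCoeff_one_left, ← Algebra.algebraMap_eq_smul_one, Ideal.Quotient.algebraMap_eq]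
    simp [bundleSign, chernClass, chernPoly_zero]
  rw [← Derivation.neg_apply, derivation_eq_nsmul_of_isWeightedHomogeneous hx neg_apply_X,
    ← Algebra.algebraMap_eq_smul_one, Ideal.Quotient.algebraMap_eq]

attribute [local instance] LieRing.ofAssociativeRing

lemma lie_raising_lowering_apply (hk : k ≤ n) {d : ℕ} {x : PR n k ⧸ Igr n k}
    (hx : x ∈ Agr n k d) :
    ⁅raising n k, lowering hk⁆ x = (2 * d - (k * (n - k) : ℕ) : ℂ) • x := by
  obtain ⟨x, hx, rfl⟩ := hx
  have lowering_one : polyLowering n k (chernPoly n k true 1) = (k * (n - k) : ℕ) • 1 := by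
    rw [polyLowering_chernPoly, loweringValue, firstOrderCoeff]
    simp [bundleSign, bundleRank, chernClass, chernPoly_zero]
  calc ⁅raising n k, lowering hk⁆ (Ideal.Quotient.mk (Igr n k) x)
      = chernPoly n k true 1 • polyLowering n k x - polyLowering n k (chernPoly n k true 1 * x) :=
        rfl
    _ = (2 * d - (k * (n - k) : ℕ) : ℂ) • Ideal.Quotient.mk (Igr n k) x := by
        rw [polyLowering_mul hk, lowering_one, carreDuChamp_chernPoly_one hk hx, smul_comm x,
          ← Algebra.algebraMap_eq_smul_one, Ideal.Quotient.algebraMap_eq]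
        simp only [← Nat.cast_smul_eq_nsmul ℂ]
        module

lemma iSup_Agr : ⨆ d, Agr n k d = ⊤ := by
  refine eq_top_iff.mpr fun x _ ↦ ?_
  obtain ⟨x, rfl⟩ := Ideal.Quotient.mk_surjective x
  rw [← sum_weightedHomogeneousComponent (wt n k) x, finsum_eq_sum _
    (weightedHomogeneousComponent_finsupp x), map_sum]
  exact sum_mem fun d _ ↦ Submodule.mem_iSup_of_mem d
    (mk_mem_Agr (weightedHomogeneousComponent_isWeightedHomogeneous d x))

lemma linearMap_ext_Agr {φ ψ : Module.End ℂ (PR n k ⧸ Igr n k)}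
    (h : ∀ d, ∀ x ∈ Agr n k d, φ x = ψ x) : φ = ψ := by
  rw [← LinearMap.eqLocus_eq_top, eq_top_iff, ← iSup_Agr]
  exact iSup_le h

lemma raising_mem_Agr {d : ℕ} {x : PR n k ⧸ Igr n k} (hx : x ∈ Agr n k d) :
    raising n k x ∈ Agr n k (d + 1) := by
  rw [add_comm]
  exact mul_mem_Agr (chernClass_mem_Agr true 1) hx

lemma lowering_mem_Agr (hk : k ≤ n) {d : ℕ} {x : PR n k ⧸ Igr n k} (hx : x ∈ Agr n k d) :
    lowering hk x ∈ Agr n k (d - 1) := by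
  obtain ⟨x, hx, rfl⟩ := hx
  exact polyLowering_mem_Agr hx

lemma Igr_ne_top : Igr n k ≠ ⊤ := by
  have : Igr n k ≤ RingHom.ker (constantCoeff (σ := Fin k ⊕ Fin (n - k)) (R := ℂ)) := by
    refine Ideal.span_le.mpr ?_
    rintro _ ⟨m, hm, rfl⟩
    have hm : 1 ≤ m := (Finset.mem_Icc.mp hm).1
    have constantCoeff_chernPoly {s : Bool} {a : ℕ} (ha : a ≠ 0) :
        constantCoeff (chernPoly n k s a) = 0 := by
      rw [constantCoeff_eq]
      refine (isWeightedHomogeneous_chernPoly s a).coeff_eq_zero 0 ?_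
      rwa [map_zero, ne_comm]
    simp only [Rm, SetLike.mem_coe, RingHom.mem_ker, map_sum, map_mul]
    refine sum_eq_zero fun rs hrs ↦ ?_
    have hrs := mem_antidiagonal.mp hrs
    change constantCoeff (chernPoly n k true rs.1) * constantCoeff (chernPoly n k false rs.2) = 0
    rcases Nat.eq_zero_or_pos rs.1 with h | h
    · rw [constantCoeff_chernPoly (s := false) (by lia), mul_zero]
    · rw [constantCoeff_chernPoly (s := true) h.ne', zero_mul]
  exact ne_top_of_le_ne_top (RingHom.ker_ne_top _) this

lemma isSl2Triple_raising_lowering (hk : k ≤ n) (h0 : k * (n - k) ≠ 0) :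
    IsSl2Triple ⁅raising n k, lowering hk⁆ (raising n k) (lowering hk) where
  h_ne_zero h := by
    have : Nontrivial (PR n k ⧸ Igr n k) := Ideal.Quotient.nontrivial_iff.mpr Igr_ne_top
    have := lie_raising_lowering_apply hk (chernClass_mem_Agr (n := n) (k := k) true 0)
    rw [h, chernClass, chernPoly_zero, map_one] at this
    refine smul_ne_zero ?_ one_ne_zero this.symm
    rwa [Nat.cast_zero, mul_zero, zero_sub, neg_ne_zero, Nat.cast_ne_zero]
  lie_e_f := rfl
  lie_h_e_nsmul := by
    refine linearMap_ext_Agr fun d x hx ↦ ?_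
    rw [LieRing.of_associative_ring_bracket, LinearMap.sub_apply, Module.End.mul_apply,
      Module.End.mul_apply, lie_raising_lowering_apply hk hx,
      lie_raising_lowering_apply hk (raising_mem_Agr hx), map_smul, ← sub_smul,
      LinearMap.smul_apply, ← Nat.cast_smul_eq_nsmul ℂ]
    congr 1
    push_cast
    ring
  lie_h_f_nsmul := by
    refine linearMap_ext_Agr fun d x hx ↦ ?_
    rw [LieRing.of_associative_ring_bracket, LinearMap.sub_apply, Module.End.mul_apply,
      Module.End.mul_apply, lie_raising_lowering_apply hk hx,
      lie_raising_lowering_apply hk (lowering_mem_Agr hk hx), map_smul, ← sub_smul,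
      LinearMap.neg_apply, LinearMap.smul_apply, ← Nat.cast_smul_eq_nsmul ℂ, ← neg_smul]
    cases d with
    | zero =>
      have : lowering hk x = 0 := by simpa using pow_lowering_eq_zero hk hx
      rw [this, smul_zero, smul_zero]
    | succ d =>
      congr 1
      push_cast [Nat.add_sub_cancel]
      ring

lemma Agr_eq_eigenspace (hk : k ≤ n) (d : ℕ) : Agr n k d =
    Module.End.eigenspace ⁅raising n k, lowering hk⁆ (2 * d - (k * (n - k) : ℕ) : ℂ) := by
  have Agr_le (d : ℕ) : Agr n k d ≤
      Module.End.eigenspace ⁅raising n k, lowering hk⁆ (2 * d - (k * (n - k) : ℕ) : ℂ) :=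
    fun x hx ↦ Module.End.mem_eigenspace_iff.mpr (lie_raising_lowering_apply hk hx)
  have weight_injective :
      Function.Injective fun d : ℕ ↦ (2 * d - (k * (n - k) : ℕ) : ℂ) := fun a b h ↦ by
    simpa using h
  have eigenspaces_iSupIndep :=
    (Module.End.eigenspaces_iSupIndep ⁅raising n k, lowering hk⁆).comp weight_injective
  exact congrFun ((eigenspaces_iSupIndep.le_iff_eq_of_iSup_eq_top iSup_Agr).mp Agr_le) d

lemma bijOn_pow_raising (hk : k ≤ n) (h0 : k * (n - k) ≠ 0) {j : ℕ} (hj : 2 * j ≤ k * (n - k)) :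
    Set.BijOn (raising n k ^ (k * (n - k) - 2 * j)) (Agr n k j) (Agr n k (k * (n - k) - j)) := by
  have source_eq : Agr n k j = Module.End.eigenspace ⁅raising n k, lowering hk⁆
      (-(k * (n - k) - 2 * j : ℕ) : ℂ) := by
    rw [Agr_eq_eigenspace hk, Nat.cast_sub hj]
    push_cast
    rw [neg_sub]
  have target_eq : Agr n k (k * (n - k) - j) = Module.End.eigenspace ⁅raising n k, lowering hk⁆
      ((k * (n - k) - 2 * j : ℕ) : ℂ) := by
    rw [Agr_eq_eigenspace hk, Nat.cast_sub hj, Nat.cast_sub (by lia)]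
    push_cast
    ring_nf
  obtain ⟨s, hs⟩ := exists_pow_raising_eq_zero hk
  rw [source_eq, target_eq]
  refine bijOn_pow_toEnd_e_eigenspace (isSl2Triple_raising_lowering hk h0) _
    (fun x hx ↦ ⟨j + 1, ?_⟩) (fun x _ ↦ ⟨s, ?_⟩)
  · exact pow_lowering_eq_zero hk (source_eq ▸ hx)
  · exact LinearMap.congr_fun hs x

end Grassmannian

/-- Hard Lefschetz for the cohomology of the complex Grassmannian: for `0 ≤ 2j ≤ k(n-k)`,
multiplication by the class of `p_1^{k(n-k)-2j}` maps `A_j ≅ H^{2j}` bijectively onto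
`A_{k(n-k)-j} ≅ H^{2(k(n-k)-j)}`: it is surjective onto `A_{k(n-k)-j}` and injective on `A_j`,
hence a `ℂ`-linear isomorphism `A_j ≃ A_{k(n-k)-j}`. -/
theorem hard_lefschetz_grassmannian (n k : ℕ) (hk1 : 1 ≤ k) (hk2 : k ≤ n - 1)
    (j : ℕ) (hj : 2 * j ≤ k * (n - k)) :
    (Submodule.map
        (LinearMap.mulLeft ℂ (Ideal.Quotient.mk (Igr n k) (pZ n k 1 ^ (k * (n - k) - 2 * j))))
        (Agr n k j)
      = Agr n k (k * (n - k) - j))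
    ∧ ∀ x ∈ Agr n k j,
        Ideal.Quotient.mk (Igr n k) (pZ n k 1 ^ (k * (n - k) - 2 * j)) * x = 0 → x = 0 := by
  have hk : k ≤ n := by lia
  have h0 : k * (n - k) ≠ 0 := mul_ne_zero (by lia) (by lia)
  have mulLeft_eq : LinearMap.mulLeft ℂ
      (Ideal.Quotient.mk (Igr n k) (pZ n k 1 ^ (k * (n - k) - 2 * j))) =
        raising n k ^ (k * (n - k) - 2 * j) := by
    rw [raising, LinearMap.pow_mulLeft, map_pow]
    rfl
  have lefschetz := bijOn_pow_raising hk h0 hj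
  rw [← mulLeft_eq] at lefschetz
  exact ⟨SetLike.coe_injective lefschetz.image_eq, fun x hx h ↦
    lefschetz.injOn hx (zero_mem _) (h.trans (map_zero _).symm)⟩
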